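/- arXiv:math/0306390 — 2 statements merged into one kernel-verified Lean document; each statement's English description precedes it below -/
import Mathlib

section
/- Let A be an open subset of ℝ⁴ (coordinates (t,x₁,x₂,x₃)) and let μ : A → ℂ be a C² map satisfying on A the equations ∂_vμ + i·μ·∂_{q₂}μ = 0 and ∂_{q̄₂}μ − i·μ·∂_wμ = 0, where ∂_v = ½(∂_t + ∂₁), ∂_w = ½(∂₁ − ∂_t), ∂_{q₂} = ½(∂₂ − i∂₃), ∂_{q̄₂} = ½(∂₂ + i∂₃). Then on A: −∂_t²μ + ∂₁²μ + ∂₂²μ + ∂₃²μ = 0 and −(∂_tμ)² + (∂₁μ)² + (∂₂μ)² + (∂₃μ)² = 0; that is, μ is a harmonic morphism from Minkowski 4-space to ℂ. -/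
noncomputable section

/-- Partial derivative in the `i`-th coordinate direction of a map `ℝ⁴ → ℂ`;
coordinates on `ℝ⁴` are `(t, x₁, x₂, x₃)`, with `t` the coordinate of index `0`. -/
def pd (i : Fin 4) (f : (Fin 4 → ℝ) → ℂ) (y : Fin 4 → ℝ) : ℂ :=
  fderiv ℝ f y (Pi.single i 1)

/-!
Extend derivatives to complex tangent vectors. In the null tetrad `v, w, q = q₂, q̄ = q̄₂` the
inverse Minkowski metric is `4 (v ⊙ w + q ⊙ q̄)`, so the wave operator is
`4 (∂_w ∂_v + ∂_q ∂_q̄)` and the square of the gradient of `μ` is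
`4 (∂_w μ ∂_v μ + ∂_q μ ∂_q̄ μ)`. With `g = i μ` the congruence equations read
`∂_v μ = -g ∂_q μ` and `∂_q̄ μ = g ∂_w μ`. Substituting them makes the squared gradient vanish,
and differentiating them makes the second-order terms of the wave operator cancel, which leaves the
Jacobian `∂_q g ∂_w μ - ∂_w g ∂_q μ`. This is zero because `g` is a function of `μ`.
-/

open Complex Filter
open scoped TensorProduct Topology

section ComplexifiedDerivative

variable {E F G 𝔸 : Type*} [NormedAddCommGroup E] [NormedSpace ℝ E]
  [NormedAddCommGroup G] [NormedSpace ℝ G]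
  [NormedAddCommGroup F] [NormedSpace ℂ F] [NormedCommRing 𝔸] [NormedAlgebra ℂ 𝔸]

/-- The derivative of `f` at `y`, extended `ℂ`-linearly to complex tangent vectors, that is to
the complexification `ℂ ⊗[ℝ] E`. -/
def complexFDeriv (f : E → F) (y : E) : ℂ ⊗[ℝ] E →ₗ[ℂ] F :=
  (fderiv ℝ f y).toLinearMap.liftBaseChange ℂ

/-- The second derivative of `f` at `y`, extended `ℂ`-bilinearly to complex tangent vectors. The
first argument is the direction in which the first derivative is differentiated. -/
def complexHessian (f : E → F) (y : E) : ℂ ⊗[ℝ] E →ₗ[ℂ] ℂ ⊗[ℝ] E →ₗ[ℂ] F :=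
  (LinearMap.liftBaseChangeEquiv ℂ).toLinearMap ∘ₗ
    ContinuousLinearMap.coeLM ℂ ∘ₗ complexFDeriv (fderiv ℝ f) y

@[simp]
lemma complexFDeriv_tmul (f : E → F) (y : E) (a : ℂ) (x : E) :
    complexFDeriv f y (a ⊗ₜ x) = a • fderiv ℝ f y x := by
  simp [complexFDeriv]

@[simp]
lemma complexHessian_tmul (f : E → F) (y : E) (ζ : ℂ ⊗[ℝ] E) (b : ℂ) (x : E) :
    complexHessian f y ζ (b ⊗ₜ x) = b • complexFDeriv (fderiv ℝ f) y ζ x := by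
  simp [complexHessian]

lemma complexFDeriv_congr {f g : E → F} {y : E} (h : f =ᶠ[𝓝 y] g) :
    complexFDeriv f y = complexFDeriv g y := by
  rw [complexFDeriv, h.fderiv_eq, complexFDeriv]

lemma complexFDeriv_add {f g : E → F} {y : E} (hf : DifferentiableAt ℝ f y)
    (hg : DifferentiableAt ℝ g y) :
    complexFDeriv (fun z ↦ f z + g z) y = complexFDeriv f y + complexFDeriv g y := by
  ext x
  simp [fderiv_fun_add hf hg]

lemma complexFDeriv_const_smul {f : E → F} {y : E} (hf : DifferentiableAt ℝ f y) (c : ℂ) :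
    complexFDeriv (fun z ↦ c • f z) y = c • complexFDeriv f y := by
  ext x
  simp [fderiv_fun_const_smul hf]

lemma complexFDeriv_clm_apply {c : E → G →L[ℝ] F} {y : E} (hc : DifferentiableAt ℝ c y)
    (x : G) (ζ : ℂ ⊗[ℝ] E) :
    complexFDeriv (fun z ↦ c z x) y ζ = complexFDeriv c y ζ x := by
  induction ζ with
  | zero => simp
  | tmul a x' => simp [fderiv_clm_apply hc (differentiableAt_const x)]
  | add ζ ω hζ hω => simp [hζ, hω]

lemma complexFDeriv_mul {f g : E → 𝔸} {y : E} (hf : DifferentiableAt ℝ f y)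
    (hg : DifferentiableAt ℝ g y) (ζ : ℂ ⊗[ℝ] E) :
    complexFDeriv (fun z ↦ f z * g z) y ζ =
      complexFDeriv f y ζ * g y + f y * complexFDeriv g y ζ := by
  induction ζ with
  | zero => simp
  | tmul a x => simp [fderiv_fun_mul hf hg, mul_comm, add_comm]
  | add ζ ω hζ hω => rw [map_add, hζ, hω, map_add, map_add]; ring

lemma differentiableAt_fderiv_of_contDiffAt {f : E → G} {y : E} (hf : ContDiffAt ℝ 2 f y) :
    DifferentiableAt ℝ (fderiv ℝ f) y :=
  (hf.fderiv_right (m := 1) (by norm_num)).differentiableAt one_ne_zero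

lemma complexHessian_comm {f : E → F} {y : E} (hf : IsSymmSndFDerivAt ℝ f y)
    (ζ ω : ℂ ⊗[ℝ] E) : complexHessian f y ζ ω = complexHessian f y ω ζ := by
  induction ζ with
  | zero => simp
  | add ζ₁ ζ₂ h₁ h₂ => simp [h₁, h₂]
  | tmul a x =>
    induction ω with
    | zero => simp
    | add ω₁ ω₂ h₁ h₂ => simp [h₁, h₂]
    | tmul b x' => simp [hf.eq x x', smul_comm a b]

lemma differentiableAt_complexFDeriv {f : E → F} {y : E}
    (hf : DifferentiableAt ℝ (fderiv ℝ f) y) (ω : ℂ ⊗[ℝ] E) :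
    DifferentiableAt ℝ (fun z ↦ complexFDeriv f z ω) y := by
  induction ω with
  | zero => simp
  | tmul a x =>
    simp only [complexFDeriv_tmul]
    fun_prop
  | add ω₁ ω₂ h₁ h₂ =>
    simp only [map_add]
    fun_prop

lemma complexFDeriv_complexFDeriv {f : E → F} {y : E}
    (hf : DifferentiableAt ℝ (fderiv ℝ f) y) (ζ ω : ℂ ⊗[ℝ] E) :
    complexFDeriv (fun z ↦ complexFDeriv f z ω) y ζ = complexHessian f y ζ ω := by
  induction ω with
  | zero => simp [complexFDeriv]
  | tmul b x =>
    simp only [complexFDeriv_tmul, complexHessian_tmul]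
    rw [complexFDeriv_const_smul (by fun_prop), LinearMap.smul_apply, complexFDeriv_clm_apply hf]
  | add ω₁ ω₂ h₁ h₂ =>
    simp only [map_add]
    rw [complexFDeriv_add (differentiableAt_complexFDeriv hf ω₁)
      (differentiableAt_complexFDeriv hf ω₂), LinearMap.add_apply, h₁, h₂]

lemma complexHessian_eq_of_eventually_eq_mul {f g : E → 𝔸} {y : E} {q v : ℂ ⊗[ℝ] E}
    (hf : DifferentiableAt ℝ (fderiv ℝ f) y) (hg : DifferentiableAt ℝ g y)
    (h : ∀ᶠ z in 𝓝 y, complexFDeriv f z v = g z * complexFDeriv f z q) (w : ℂ ⊗[ℝ] E) :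
    complexHessian f y w v =
      complexFDeriv g y w * complexFDeriv f y q + g y * complexHessian f y w q := by
  rw [← complexFDeriv_complexFDeriv hf, complexFDeriv_congr h,
    complexFDeriv_mul hg (differentiableAt_complexFDeriv hf q), complexFDeriv_complexFDeriv hf]

theorem complexHessian_add_complexHessian_eq_jacobian {f g : E → 𝔸} {y : E}
    {v w q p : ℂ ⊗[ℝ] E} (hf : ContDiffAt ℝ 2 f y) (hg : DifferentiableAt ℝ g y)
    (hv : ∀ᶠ z in 𝓝 y, complexFDeriv f z v = -(g z * complexFDeriv f z q))
    (hp : ∀ᶠ z in 𝓝 y, complexFDeriv f z p = g z * complexFDeriv f z w) :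
    complexHessian f y w v + complexHessian f y q p =
      complexFDeriv g y q * complexFDeriv f y w - complexFDeriv g y w * complexFDeriv f y q := by
  have hf' := differentiableAt_fderiv_of_contDiffAt hf
  have hv' : ∀ᶠ z in 𝓝 y, complexFDeriv f z (-v) = g z * complexFDeriv f z q := by
    simpa [neg_eq_iff_eq_neg] using hv
  have hwv := complexHessian_eq_of_eventually_eq_mul hf' hg hv' w
  have hqp := complexHessian_eq_of_eventually_eq_mul hf' hg hp q
  have hwq := complexHessian_comm (hf.isSymmSndFDerivAt (by simp)) w q
  rw [map_neg] at hwv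
  linear_combination hqp - hwv - g y * hwq

end ComplexifiedDerivative

section NullTetrad

/-- The coordinate vector field `∂ᵢ` of Minkowski space as a complex tangent vector. -/
def coordVec (i : Fin 4) : ℂ ⊗[ℝ] (Fin 4 → ℝ) := 1 ⊗ₜ Pi.single i 1

/-- The null vector field `∂_v = ½(∂_t + ∂₁)`. -/
def nullV : ℂ ⊗[ℝ] (Fin 4 → ℝ) := (1 / 2 : ℂ) • (coordVec 0 + coordVec 1)

/-- The null vector field `∂_w = ½(∂₁ - ∂_t)`. -/
def nullW : ℂ ⊗[ℝ] (Fin 4 → ℝ) := (1 / 2 : ℂ) • (coordVec 1 - coordVec 0)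

/-- The complex null vector field `∂_{q₂} = ½(∂₂ - i∂₃)`. -/
def nullQ : ℂ ⊗[ℝ] (Fin 4 → ℝ) := (1 / 2 : ℂ) • (coordVec 2 - I • coordVec 3)

/-- The complex null vector field `∂_{q̄₂} = ½(∂₂ + i∂₃)`, conjugate to `nullQ`. -/
def nullQBar : ℂ ⊗[ℝ] (Fin 4 → ℝ) := (1 / 2 : ℂ) • (coordVec 2 + I • coordVec 3)

variable {f : (Fin 4 → ℝ) → ℂ} {y : Fin 4 → ℝ}

lemma complexFDeriv_coordVec (i : Fin 4) : complexFDeriv f y (coordVec i) = pd i f y := by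
  simp [coordVec, pd]

lemma complexHessian_coordVec (hf : DifferentiableAt ℝ (fderiv ℝ f) y) (i j : Fin 4) :
    complexHessian f y (coordVec i) (coordVec j) = pd i (pd j f) y := by
  simp only [← complexFDeriv_complexFDeriv hf, complexFDeriv_coordVec]

lemma complexFDeriv_nullV : complexFDeriv f y nullV = (pd 0 f y + pd 1 f y) / 2 := by
  simp only [nullV, map_smul, map_add, complexFDeriv_coordVec, smul_eq_mul]
  ring

lemma complexFDeriv_nullW : complexFDeriv f y nullW = (pd 1 f y - pd 0 f y) / 2 := by
  simp only [nullW, map_smul, map_sub, complexFDeriv_coordVec, smul_eq_mul]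
  ring

lemma complexFDeriv_nullQ : complexFDeriv f y nullQ = (pd 2 f y - I * pd 3 f y) / 2 := by
  simp only [nullQ, map_smul, map_sub, complexFDeriv_coordVec, smul_eq_mul]
  ring

lemma complexFDeriv_nullQBar : complexFDeriv f y nullQBar = (pd 2 f y + I * pd 3 f y) / 2 := by
  simp only [nullQBar, map_smul, map_add, complexFDeriv_coordVec, smul_eq_mul]
  ring

lemma minkowski_gradSq_eq_nullTetrad :
    -(pd 0 f y) ^ 2 + (pd 1 f y) ^ 2 + (pd 2 f y) ^ 2 + (pd 3 f y) ^ 2 =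
      4 * (complexFDeriv f y nullW * complexFDeriv f y nullV +
        complexFDeriv f y nullQ * complexFDeriv f y nullQBar) := by
  rw [complexFDeriv_nullV, complexFDeriv_nullW, complexFDeriv_nullQ, complexFDeriv_nullQBar]
  linear_combination pd 3 f y ^ 2 * I_sq

lemma minkowski_wave_eq_nullTetrad (hf : ContDiffAt ℝ 2 f y) :
    -(pd 0 (pd 0 f) y) + pd 1 (pd 1 f) y + pd 2 (pd 2 f) y + pd 3 (pd 3 f) y =
      4 * (complexHessian f y nullW nullV + complexHessian f y nullQ nullQBar) := by
  have hf' := differentiableAt_fderiv_of_contDiffAt hf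
  have hcomm := complexHessian_comm (hf.isSymmSndFDerivAt (by simp))
  simp only [← complexHessian_coordVec hf', nullV, nullW, nullQ, nullQBar, map_smul, map_add,
    map_sub, LinearMap.smul_apply, LinearMap.sub_apply, smul_eq_mul]
  linear_combination hcomm (coordVec 0) (coordVec 1) +
    I * hcomm (coordVec 3) (coordVec 2) + complexHessian f y (coordVec 3) (coordVec 3) * I_sq

end NullTetrad

/-- Proposition 6.4: a `C²` map `μ` on an open subset of Minkowski `ℝ⁴` satisfying the
shear-free ray congruence equations `∂_v μ + i μ ∂_{q₂}μ = 0`, `∂_{q̄₂}μ − i μ ∂_w μ = 0`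
(with `∂_v = ½(∂_t + ∂₁)`, `∂_w = ½(∂₁ − ∂_t)`, `∂_{q₂} = ½(∂₂ − i∂₃)`,
`∂_{q̄₂} = ½(∂₂ + i∂₃)`) is a harmonic morphism from Minkowski space:
`−∂ₜ²μ + ∂₁²μ + ∂₂²μ + ∂₃²μ = 0` and `−(∂ₜμ)² + (∂₁μ)² + (∂₂μ)² + (∂₃μ)² = 0`. -/
theorem sfr_representative_is_harmonic_morphism
    (A : Set (Fin 4 → ℝ)) (hA : IsOpen A)
    (μ : (Fin 4 → ℝ) → ℂ) (hμ : ContDiffOn ℝ 2 μ A)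
    (heq1 : ∀ y ∈ A,
      (pd 0 μ y + pd 1 μ y) / 2
        + Complex.I * μ y * ((pd 2 μ y - Complex.I * pd 3 μ y) / 2) = 0)
    (heq2 : ∀ y ∈ A,
      (pd 2 μ y + Complex.I * pd 3 μ y) / 2
        - Complex.I * μ y * ((pd 1 μ y - pd 0 μ y) / 2) = 0) :
    ∀ y ∈ A,
      (-(pd 0 (pd 0 μ) y) + pd 1 (pd 1 μ) y + pd 2 (pd 2 μ) y + pd 3 (pd 3 μ) y = 0) ∧
      (-((pd 0 μ y) ^ 2) + (pd 1 μ y) ^ 2 + (pd 2 μ y) ^ 2 + (pd 3 μ y) ^ 2 = 0) := by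
  intro y hy
  have hμy : ContDiffAt ℝ 2 μ y := hμ.contDiffAt (hA.mem_nhds hy)
  have hv : ∀ z ∈ A, complexFDeriv μ z nullV = -(I • μ z * complexFDeriv μ z nullQ) := by
    intro z hz
    rw [complexFDeriv_nullV, complexFDeriv_nullQ]
    exact eq_neg_of_add_eq_zero_left (heq1 z hz)
  have hq : ∀ z ∈ A, complexFDeriv μ z nullQBar = I • μ z * complexFDeriv μ z nullW := by
    intro z hz
    rw [complexFDeriv_nullQBar, complexFDeriv_nullW]
    exact sub_eq_zero.mp (heq2 z hz)
  constructor
  · have hμd : DifferentiableAt ℝ μ y := hμy.differentiableAt two_ne_zero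
    rw [minkowski_wave_eq_nullTetrad hμy,
      complexHessian_add_complexHessian_eq_jacobian hμy (hμd.fun_const_smul I)
        (eventually_of_mem (hA.mem_nhds hy) hv) (eventually_of_mem (hA.mem_nhds hy) hq),
      complexFDeriv_const_smul hμd]
    simp only [LinearMap.smul_apply, smul_eq_mul]
    ring
  · rw [minkowski_gradSq_eq_nullTetrad, hv y hy, hq y hy]
    ring

end
end

section
/- Let A³ be an open subset of ℝ³ and let f : A³ → ℂ be real-analytic with ∑ᵢ₌₁³ (∂f/∂xᵢ)² = 0 on A³ and with surjective differential df_x : ℝ³ → ℂ at every x ∈ A³. Then there exist an open set A⁴ ⊆ ℝ⁴ (coordinates (x₀,x₁,x₂,x₃)) with A⁴ ∩ {x₀ = 0} = {0} × A³, and a real-analytic map φ : A⁴ → ℂ with surjective differential at every point, such that φ(0,x) = f(x) for all x ∈ A³ and, on A⁴: x₀·(∑ᵢ₌₀³ ∂²φ/∂xᵢ²) − 2·∂φ/∂x₀ = 0 and ∑ᵢ₌₀³ (∂φ/∂xᵢ)² = 0. -/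
noncomputable section

/-- Partial derivative in the `i`-th coordinate direction of a map `ℝ³ → ℂ`;
coordinates on `ℝ³` are `(x₁, x₂, x₃)`. -/
def pd3 (i : Fin 3) (f : (Fin 3 → ℝ) → ℂ) (x : Fin 3 → ℝ) : ℂ :=
  fderiv ℝ f x (Pi.single i 1)

/-- Inclusion of `ℝ³` as the slice `{x₀ = 0}` of `ℝ⁴`. -/
def slice0 (x : Fin 3 → ℝ) : Fin 4 → ℝ := Fin.cons 0 x

/-!
Extend `f`, and the unit tangent of its fibres, holomorphically to `F` and `U` near `A³` in `ℂ³`. A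
real point `(x₀, x)` near `{0} × A³` then has a complex foot `y` with `y + i x₀ U(y) = x`, and the
harmonic morphism is `φ(x₀, x) = F(y)`. Its gradient `p = ∇φ` and the vector `N = (1, i U(y))` span
a totally isotropic plane of `ℂ⁴`, and differentiating `p ⬝ p = 0` and `N ⬝ p = 0` shows that this
plane is preserved by the Hessian `H` of `φ`, with `p H = 0` and `x₀ N H ≡ p₀ N` modulo `p`. The
trace of a symmetric matrix preserving a maximal isotropic subspace is twice that of its
restriction, so `x₀ Δφ = 2 p₀`.
-/

section IsotropicFrames

open Matrix

variable {K m n : Type*} [Field K] [Fintype m] [Fintype n]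

lemma exists_right_inverse_of_linearIndependent_row [DecidableEq m] {L : Matrix m n K}
    (hL : LinearIndependent K L.row) : ∃ B : Matrix n m K, L * B = 1 := by
  classical
  have hker : LinearMap.ker L.vecMulLinear = ⊥ :=
    LinearMap.ker_eq_bot.2 (vecMul_injective_iff.2 hL)
  obtain ⟨g, hg⟩ := L.vecMulLinear.exists_leftInverse_of_injective hker
  refine ⟨(LinearMap.toMatrix' g)ᵀ, ?_⟩
  rw [← transpose_inj, transpose_mul, transpose_transpose, transpose_one,
    ← LinearMap.toMatrix'_id, ← hg, LinearMap.toMatrix'_comp]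
  congr 1
  ext i j
  simp [LinearMap.toMatrix'_apply]

lemma isotropic_frame_resolution [DecidableEq m] [DecidableEq n] {L R : Matrix m n K}
    (e : n ≃ m ⊕ m) (hLL : L * Lᵀ = 0) (hRR : R * Rᵀ = 0) (hLR : L * Rᵀ = 1) :
    Lᵀ * R + Rᵀ * L = 1 := by
  have hRL : R * Lᵀ = 1 := by rw [← transpose_inj]; simpa using hLR
  rw [← fromCols_mul_fromRows, fromCols_mul_fromRows_eq_one_comm e, fromRows_mul_fromCols,
    hLL, hRR, hLR, hRL, fromBlocks_one]

lemma isotropic_pair_mul_transpose {u v : n → K} (huu : u ⬝ᵥ u = 0)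
    (huv : u ⬝ᵥ v = 0) (hvv : v ⬝ᵥ v = 0) :
    (of ![u, v] : Matrix (Fin 2) n K) * (of ![u, v])ᵀ = 0 := by
  have hvu : v ⬝ᵥ u = 0 := by rw [dotProduct_comm, huv]
  ext i j
  fin_cases i <;> fin_cases j
  exacts [huu, huv, hvu, hvv]

lemma fin_cons_dotProduct_cons {k : ℕ} (s t : K) (q r : Fin k → K) :
    (Fin.cons s q : Fin (k + 1) → K) ⬝ᵥ (Fin.cons t r : Fin (k + 1) → K) = s * t + q ⬝ᵥ r :=
  cons_dotProduct_cons s q t r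

variable [NeZero (2 : K)]

lemma exists_isotropic_dual_frame [DecidableEq m] {L : Matrix m n K} (hLL : L * Lᵀ = 0)
    (hL : LinearIndependent K L.row) : ∃ R : Matrix m n K, R * Rᵀ = 0 ∧ L * Rᵀ = 1 := by
  obtain ⟨B, hB⟩ := exists_right_inverse_of_linearIndependent_row hL
  have hB' : Bᵀ * Lᵀ = 1 := by rw [← transpose_mul, hB, transpose_one]
  obtain ⟨R, hR⟩ : ∃ R, R = Bᵀ - (2⁻¹ : K) • (Bᵀ * B * L) := ⟨_, rfl⟩
  have hRT : Rᵀ = B - (2⁻¹ : K) • (Lᵀ * (Bᵀ * B)) := by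
    simp only [hR, transpose_sub, transpose_smul, transpose_mul, transpose_transpose]
  have hLR : L * Rᵀ = 1 := by
    rw [hRT, Matrix.mul_sub, Matrix.mul_smul, ← Matrix.mul_assoc, hLL, hB, Matrix.zero_mul,
      smul_zero, sub_zero]
  have hBR : Bᵀ * Rᵀ = (2⁻¹ : K) • (Bᵀ * B) := by
    rw [hRT, Matrix.mul_sub, Matrix.mul_smul, ← Matrix.mul_assoc, hB', Matrix.one_mul,
      sub_eq_iff_eq_add, ← add_smul, ← two_mul, mul_inv_cancel₀ two_ne_zero, one_smul]
  have hRR : R * Rᵀ = 0 := by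
    nth_rewrite 1 [hR]
    rw [Matrix.sub_mul, Matrix.smul_mul, Matrix.mul_assoc _ L, hLR, hBR, Matrix.mul_one, sub_self]
  exact ⟨R, hRR, hLR⟩

variable {L : Matrix m n K}

lemma exists_vecMul_eq_of_mulVec_eq_zero (e : n ≃ m ⊕ m) (hLL : L * Lᵀ = 0)
    (hL : LinearIndependent K L.row) {v : n → K} (hv : L *ᵥ v = 0) : ∃ c, c ᵥ* L = v := by
  classical
  obtain ⟨R, hRR, hLR⟩ := exists_isotropic_dual_frame hLL hL
  refine ⟨R *ᵥ v, ?_⟩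
  calc (R *ᵥ v) ᵥ* L = (Lᵀ * R + Rᵀ * L) *ᵥ v := by
        rw [add_mulVec, ← mulVec_mulVec, ← mulVec_mulVec, hv, mulVec_zero, add_zero,
          mulVec_transpose]
    _ = v := by rw [isotropic_frame_resolution e hLL hRR hLR, one_mulVec]

/- Writing the trace in the frame `L, R` dual to itself, the two diagonal blocks of a symmetric
matrix are `T` and its transpose. -/
lemma trace_eq_two_mul_of_isotropic_invariant (e : n ≃ m ⊕ m) (hLL : L * Lᵀ = 0)
    (hL : LinearIndependent K L.row) {H : Matrix n n K} (hH : H.IsSymm) {T : Matrix m m K}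
    (hT : L * H = T * L) : H.trace = 2 * T.trace := by
  classical
  obtain ⟨R, hRR, hLR⟩ := exists_isotropic_dual_frame hLL hL
  have hblock : (Rᵀ * L * H).trace = T.trace := by
    rw [Matrix.mul_assoc, hT, trace_mul_comm, Matrix.mul_assoc, hLR, Matrix.mul_one]
  have hblock' : (Lᵀ * R * H).trace = T.trace := by
    rw [← hblock, ← trace_transpose, transpose_mul, transpose_mul, transpose_transpose, hH.eq,
      trace_mul_comm]
  rw [← Matrix.one_mul H, ← isotropic_frame_resolution e hLL hRR hLR, add_mul, trace_add, hblock,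
    hblock', two_mul]

lemma exists_eq_smul_add_smul_of_isotropic_pair {u v : Fin 4 → K}
    (huu : u ⬝ᵥ u = 0) (huv : u ⬝ᵥ v = 0) (hvv : v ⬝ᵥ v = 0) (hind : LinearIndependent K ![u, v])
    {x : Fin 4 → K} (hux : u ⬝ᵥ x = 0) (hvx : v ⬝ᵥ x = 0) : ∃ a b : K, x = a • u + b • v := by
  have hx : (of ![u, v] : Matrix (Fin 2) (Fin 4) K) *ᵥ x = 0 := by
    ext i
    fin_cases i <;> simp [hux, hvx]
  obtain ⟨c, hc⟩ := exists_vecMul_eq_of_mulVec_eq_zero finSumFinEquiv.symm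
    (isotropic_pair_mul_transpose huu huv hvv) hind hx
  exact ⟨c 0, c 1, by rw [← hc, vecMul_eq_sum, Fin.sum_univ_two]; rfl⟩

lemma trace_eq_two_mul_of_isotropic_pair {u v : Fin 4 → K} (huu : u ⬝ᵥ u = 0)
    (huv : u ⬝ᵥ v = 0) (hvv : v ⬝ᵥ v = 0) (hind : LinearIndependent K ![u, v])
    {H : Matrix (Fin 4) (Fin 4) K} (hH : H.IsSymm) {a b c d : K} (hu : u ᵥ* H = a • u + b • v)
    (hv : v ᵥ* H = c • u + d • v) : H.trace = 2 * (a + d) := by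
  have hT : of ![u, v] * H = !![a, b; c, d] * of ![u, v] := by
    ext i j
    fin_cases i
    · simpa [mul_apply, Fin.sum_univ_two, vecMul, dotProduct] using congrFun hu j
    · simpa [mul_apply, Fin.sum_univ_two, vecMul, dotProduct] using congrFun hv j
  rw [trace_eq_two_mul_of_isotropic_invariant finSumFinEquiv.symm
    (isotropic_pair_mul_transpose huu huv hvv) hind hH hT, trace_fin_two_of]

lemma exists_eq_smul_add_smul_of_null {i : K} (hi : i * i = -1) {p w : Fin 3 → K} (hp : p ≠ 0)
    (hpp : p ⬝ᵥ p = 0) (hww : w ⬝ᵥ w = 1) (hwp : w ⬝ᵥ p = 0) {x : Fin 3 → K}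
    (hpx : p ⬝ᵥ x = 0) : ∃ a b : K, x = a • p + b • w := by
  have hind : LinearIndependent K ![(Fin.cons i w : Fin 4 → K), Fin.cons 0 p] := by
    refine linearIndependent_fin2.2
      ⟨fun h => hp (funext fun j => congrFun h j.succ), fun a ha => ?_⟩
    have hi0 : i = 0 := by simpa using (congrFun ha 0).symm
    simp [hi0] at hi
  obtain ⟨a, b, h⟩ := exists_eq_smul_add_smul_of_isotropic_pair
    (u := Fin.cons i w) (v := Fin.cons 0 p) (x := Fin.cons (i * (w ⬝ᵥ x)) x)
    (by rw [fin_cons_dotProduct_cons, hi, hww, neg_add_cancel])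
    (by rw [fin_cons_dotProduct_cons, hwp, mul_zero, zero_add])
    (by rw [fin_cons_dotProduct_cons, hpp, mul_zero, zero_add]) hind
    (by rw [fin_cons_dotProduct_cons, ← mul_assoc, hi, neg_one_mul, neg_add_cancel])
    (by rw [fin_cons_dotProduct_cons, hpx, zero_mul, zero_add])
  refine ⟨b, a, funext fun j => ?_⟩
  simpa [add_comm] using congrFun h j.succ

end IsotropicFrames

section PartialDerivatives

open Matrix Filter Topology
open scoped ContDiff

variable {𝕜 𝕂 ι κ ν : Type*} [NontriviallyNormedField 𝕜] [NontriviallyNormedField 𝕂]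
  [NormedAlgebra 𝕜 𝕂] {g h : (ι → 𝕜) → 𝕂} {G a b : (ι → 𝕜) → κ → 𝕂} {x : ι → 𝕜}

lemma differentiableAt_const_dotProduct [Fintype ι] [Fintype κ] (v : κ → 𝕂)
    (hG : DifferentiableAt 𝕜 G x) : DifferentiableAt 𝕜 (fun y => v ⬝ᵥ G y) x :=
  DifferentiableAt.fun_sum fun k _ => (differentiableAt_pi.1 hG k).const_mul (v k)

variable [DecidableEq ι]

variable (𝕜) in
/-- The vector of partial derivatives of a `𝕂`-valued function of `ι` variables in `𝕜`, read as a
vector over `𝕂` so that gradients can be paired with the bilinear `⬝ᵥ` when `𝕜 = ℝ`, `𝕂 = ℂ`. -/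
def grad (g : (ι → 𝕜) → 𝕂) (x : ι → 𝕜) : ι → 𝕂 := fun i => fderiv 𝕜 g x (Pi.single i 1)

variable (𝕜) in
/-- The Jacobian matrix of a `κ → 𝕂`-valued map; its rows are the gradients of the components. -/
def jacobian (G : (ι → 𝕜) → κ → 𝕂) (x : ι → 𝕜) : Matrix κ ι 𝕂 :=
  of fun k => grad 𝕜 (fun y => G y k) x

lemma grad_congr (hgh : g =ᶠ[𝓝 x] h) : grad 𝕜 g x = grad 𝕜 h x := by
  ext i
  rw [grad, grad, hgh.fderiv_eq]

lemma grad_algebraMap_coord (i : ι) :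
    grad 𝕜 (fun y : ι → 𝕜 => algebraMap 𝕜 𝕂 (y i)) x = Pi.single i 1 := by
  have hcoord : fderiv 𝕜 (fun y : ι → 𝕜 => algebraMap 𝕜 𝕂 (y i)) x =
      algebraMapCLM 𝕜 𝕂 ∘L .proj i :=
    (algebraMapCLM 𝕜 𝕂 ∘L .proj (R := 𝕜) (φ := fun _ : ι => 𝕜) i).fderiv
  ext j
  rw [grad, hcoord]
  simp [Pi.single_apply, eq_comm]

variable [Fintype ι]

lemma grad_add (hg : DifferentiableAt 𝕜 g x) (hh : DifferentiableAt 𝕜 h x) :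
    grad 𝕜 (fun y => g y + h y) x = grad 𝕜 g x + grad 𝕜 h x := by
  ext i
  rw [grad, fderiv_fun_add hg hh]
  rfl

lemma grad_mul (hg : DifferentiableAt 𝕜 g x) (hh : DifferentiableAt 𝕜 h x) :
    grad 𝕜 (fun y => g y * h y) x = g x • grad 𝕜 h x + h x • grad 𝕜 g x := by
  ext i
  rw [grad, fderiv_fun_mul hg hh]
  rfl

lemma grad_const_mul (c : 𝕂) (hg : DifferentiableAt 𝕜 g x) :
    grad 𝕜 (fun y => c * g y) x = c • grad 𝕜 g x := by
  ext i
  rw [grad, fderiv_const_mul hg]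
  rfl

lemma fderiv_apply_eq_grad_dotProduct (v : ι → 𝕜) :
    fderiv 𝕜 g x v = grad 𝕜 g x ⬝ᵥ (algebraMap 𝕜 𝕂 ∘ v) := by
  conv_lhs => rw [← Finset.univ_sum_single v]
  have hsingle (i : ι) : (Pi.single i (v i) : ι → 𝕜) = v i • Pi.single i 1 := by
    rw [← Pi.single_smul, smul_eq_mul, mul_one]
  simp only [map_sum, hsingle, map_smul]
  simp only [Algebra.smul_def, dotProduct, grad, Function.comp_apply, mul_comm]

variable [Fintype κ]

lemma grad_comp [DecidableEq κ] {F : (κ → 𝕂) → 𝕂} (hF : DifferentiableAt 𝕂 F (G x))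
    (hG : DifferentiableAt 𝕜 G x) :
    grad 𝕜 (fun y => F (G y)) x = grad 𝕂 F (G x) ᵥ* jacobian 𝕜 G x := by
  ext i
  have hFG := (hF.hasFDerivAt.restrictScalars 𝕜).comp x hG.hasFDerivAt
  calc grad 𝕜 (fun y => F (G y)) x i
      = fderiv 𝕂 F (G x) (fderiv 𝕜 G x (Pi.single i 1)) := congrArg (· (Pi.single i 1)) hFG.fderiv
    _ = (grad 𝕂 F (G x) ᵥ* jacobian 𝕜 G x) i := by
      rw [fderiv_apply_eq_grad_dotProduct, fderiv_pi (fun k => differentiableAt_pi.1 hG k)]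
      rfl

lemma jacobian_comp [DecidableEq κ] [Fintype ν] {F : (κ → 𝕂) → ν → 𝕂}
    (hF : DifferentiableAt 𝕂 F (G x)) (hG : DifferentiableAt 𝕜 G x) :
    jacobian 𝕜 (fun y => F (G y)) x = jacobian 𝕂 F (G x) * jacobian 𝕜 G x := by
  ext k i
  rw [mul_apply_eq_vecMul]
  exact congrFun (grad_comp (differentiableAt_pi.1 hF k) hG) i

lemma grad_dotProduct (ha : DifferentiableAt 𝕜 a x) (hb : DifferentiableAt 𝕜 b x) :
    grad 𝕜 (fun y => a y ⬝ᵥ b y) x = a x ᵥ* jacobian 𝕜 b x + b x ᵥ* jacobian 𝕜 a x := by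
  ext i
  have hab := HasFDerivAt.fun_sum (u := Finset.univ) fun k _ =>
    (differentiableAt_pi.1 ha k).hasFDerivAt.fun_mul (differentiableAt_pi.1 hb k).hasFDerivAt
  have hab' : fderiv 𝕜 (fun y => a y ⬝ᵥ b y) x = _ := hab.fderiv
  rw [grad, hab', Pi.add_apply]
  simp only [vecMul, dotProduct, jacobian, grad, of_apply, Finset.sum_add_distrib]
  simp

lemma vecMul_jacobian_eq_neg_of_dotProduct_const {c : 𝕂} (ha : DifferentiableAt 𝕜 a x)
    (hb : DifferentiableAt 𝕜 b x) (hab : ∀ᶠ y in 𝓝 x, a y ⬝ᵥ b y = c) :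
    a x ᵥ* jacobian 𝕜 b x = -(b x ᵥ* jacobian 𝕜 a x) := by
  rw [eq_neg_iff_add_eq_zero, ← grad_dotProduct ha hb, grad_congr hab]
  ext i
  simp [grad]

lemma vecMul_jacobian_self_eq_zero_of_dotProduct_const [NeZero (2 : 𝕂)] {c : 𝕂}
    (ha : DifferentiableAt 𝕜 a x) (haa : ∀ᶠ y in 𝓝 x, a y ⬝ᵥ a y = c) :
    a x ᵥ* jacobian 𝕜 a x = 0 := by
  have h := vecMul_jacobian_eq_neg_of_dotProduct_const ha ha haa
  rwa [eq_neg_iff_add_eq_zero, ← two_smul 𝕂, smul_eq_zero_iff_right two_ne_zero] at h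

lemma vecMul_jacobian (v : κ → 𝕂) (hG : DifferentiableAt 𝕜 G x) :
    v ᵥ* jacobian 𝕜 G x = grad 𝕜 (fun y => v ⬝ᵥ G y) x := by
  have hconst : jacobian 𝕜 (fun _ : ι → 𝕜 => v) x = 0 := by
    ext k i
    simp [jacobian, grad]
  rw [grad_dotProduct (differentiableAt_const v) hG, hconst, vecMul_zero, add_zero]

variable [CompleteSpace 𝕂]

lemma analyticAt_grad (hg : AnalyticAt 𝕜 g x) : AnalyticAt 𝕜 (grad 𝕜 g) x :=
  AnalyticAt.pi fun i =>
    ((ContinuousLinearMap.apply 𝕜 𝕂 (Pi.single i 1 : ι → 𝕜)).analyticAt _).comp hg.fderiv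

lemma isSymm_jacobian_grad (hg : AnalyticAt 𝕜 g x) : (jacobian 𝕜 (grad 𝕜 g) x).IsSymm := by
  have hsymm := (hg.contDiffAt (n := ω)).isSymmSndFDerivAt_of_omega
  have happly (i j : ι) : jacobian 𝕜 (grad 𝕜 g) x i j
      = fderiv 𝕜 (fderiv 𝕜 g) x (Pi.single j 1) (Pi.single i 1) := by
    simp [jacobian, grad, fderiv_clm_apply hg.fderiv.differentiableAt]
  ext i j
  rw [transpose_apply, happly, happly, hsymm.eq]

end PartialDerivatives

section HorizontallyConformal

open Matrix
open scoped ComplexOrder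

variable {ι : Type*} [Fintype ι]

lemma dotProduct_ofReal_re_mul_star {p : ι → ℂ} (hp : p ⬝ᵥ p = 0) (c : ℂ) :
    (p ⬝ᵥ fun i => ((c * star (p i)).re : ℂ)) = c / 2 * (p ⬝ᵥ star p) := by
  have hre (i : ι) : p i * ((c * star (p i)).re : ℂ)
      = c / 2 * (p i * star (p i)) + star c / 2 * (p i * p i) := by
    rw [Complex.re_eq_add_conj]
    simp only [map_mul, RCLike.star_def, RingHomCompTriple.comp_apply, RingHom.id_apply]
    ring
  calc (p ⬝ᵥ fun i => ((c * star (p i)).re : ℂ))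
      = c / 2 * (p ⬝ᵥ star p) + star c / 2 * (p ⬝ᵥ p) := by
        simp only [dotProduct, hre, Finset.sum_add_distrib, ← Finset.mul_sum, Pi.star_apply]
    _ = c / 2 * (p ⬝ᵥ star p) := by rw [hp, mul_zero, add_zero]

lemma fderiv_surjective_iff_grad_ne_zero [DecidableEq ι] {g : (ι → ℝ) → ℂ} {x : ι → ℝ}
    (hg : grad ℝ g x ⬝ᵥ grad ℝ g x = 0) :
    Function.Surjective (fderiv ℝ g x) ↔ grad ℝ g x ≠ 0 := by
  refine ⟨fun hsurj h0 => ?_, fun h0 c => ?_⟩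
  · obtain ⟨v, hv⟩ := hsurj 1
    simp [fderiv_apply_eq_grad_dotProduct, h0] at hv
  · set s := grad ℝ g x ⬝ᵥ star (grad ℝ g x) with hs
    have hs0 : s ≠ 0 := dotProduct_self_star_eq_zero.not.2 h0
    refine ⟨fun i => (2 * c / s * star (grad ℝ g x i)).re, ?_⟩
    rw [fderiv_apply_eq_grad_dotProduct]
    refine (dotProduct_ofReal_re_mul_star hg _).trans ?_
    rw [← hs]
    field_simp

end HorizontallyConformal

section UnitTangent

open Matrix Complex
open scoped ComplexOrder

/-- The unit vector spanning the fibre direction of a horizontally conformal map of gradient `c`: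
`c ⨯₃ star c` is a purely imaginary multiple of `Re c ⨯₃ Im c`. -/
def unitTangent (c : Fin 3 → ℂ) : Fin 3 → ℂ := (I / (c ⬝ᵥ star c)) • (c ⨯₃ star c)

variable {c : Fin 3 → ℂ}

lemma unitTangent_dotProduct_self (hc : c ≠ 0) (hcc : c ⬝ᵥ c = 0) :
    unitTangent c ⬝ᵥ unitTangent c = 1 := by
  have hs : c ⬝ᵥ star c ≠ 0 := dotProduct_self_star_eq_zero.not.2 hc
  have hcross : c ⨯₃ star c ⬝ᵥ c ⨯₃ star c = -(c ⬝ᵥ star c) ^ 2 := by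
    rw [cross_dot_cross, hcc, dotProduct_comm (star c) c]
    ring
  rw [unitTangent, smul_dotProduct, dotProduct_smul, hcross, smul_eq_mul, smul_eq_mul]
  field_simp
  simp

lemma unitTangent_dotProduct_left (c : Fin 3 → ℂ) : unitTangent c ⬝ᵥ c = 0 := by
  rw [unitTangent, smul_dotProduct, dotProduct_comm _ c, dot_self_cross, smul_zero]

lemma analyticAt_unitTangent (hc : c ≠ 0) : AnalyticAt ℝ unitTangent c := by
  have hs : c ⬝ᵥ star c ≠ 0 := dotProduct_self_star_eq_zero.not.2 hc
  have hcoord (i : Fin 3) : AnalyticAt ℝ (fun d : Fin 3 → ℂ => d i) c :=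
    (ContinuousLinearMap.proj (R := ℝ) (φ := fun _ : Fin 3 => ℂ) i).analyticAt c
  have hstar (i : Fin 3) : AnalyticAt ℝ (fun d : Fin 3 → ℂ => star (d i)) c :=
    conjCLE.toContinuousLinearMap.analyticAt _ |>.comp (hcoord i)
  have hnorm : AnalyticAt ℝ (fun d : Fin 3 → ℂ => d ⬝ᵥ star d) c :=
    Finset.analyticAt_fun_sum _ fun i _ => (hcoord i).mul (hstar i)
  refine AnalyticAt.pi fun i => (analyticAt_const.div hnorm hs).mul ?_
  fin_cases i <;> simp only [cross_apply] <;>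
    exact ((hcoord _).mul (hstar _)).sub ((hcoord _).mul (hstar _))

end UnitTangent

section Gluing

open Filter Topology Metric

variable {𝕜 E F α : Type*} [RCLike 𝕜] [NormedAddCommGroup E] [NormedSpace 𝕜 E]
  [NormedAddCommGroup F] [NormedSpace 𝕜 F]

lemma analyticOnNhd_eqOn_of_mem_balls {g h : E → F} {a b q Y : E} {r s : ℝ}
    (hg : AnalyticOnNhd 𝕜 g (ball a r)) (hh : AnalyticOnNhd 𝕜 h (ball b s)) (hqa : q ∈ ball a r)
    (hqb : q ∈ ball b s) (hgh : g =ᶠ[𝓝 q] h) (hYa : Y ∈ ball a r) (hYb : Y ∈ ball b s) :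
    g Y = h Y := by
  let := NormedSpace.restrictScalars ℝ 𝕜 E
  have hconv : Convex ℝ (ball a r ∩ ball b s) := (convex_ball a r).inter (convex_ball b s)
  exact (hg.mono Set.inter_subset_left).eqOn_of_preconnected_of_eventuallyEq
    (hh.mono Set.inter_subset_right) hconv.isPreconnected ⟨hqa, hqb⟩ hgh ⟨hYa, hYb⟩

variable [CompleteSpace F] [TopologicalSpace α] {c : α → E} {S : Set α} {ψ : α → E → F}

lemma exists_radius_of_coherent_germs (hc : IsInducing c) {p : α} (hp : AnalyticAt 𝕜 (ψ p) (c p))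
    (hcoh : ∀ᶠ q in 𝓝[S] p, ψ q =ᶠ[𝓝 (c q)] ψ p) :
    ∃ r > 0, AnalyticOnNhd 𝕜 (ψ p) (ball (c p) r) ∧
      ∀ q ∈ S, c q ∈ ball (c p) r → ψ q =ᶠ[𝓝 (c q)] ψ p := by
  have hball : ∀ᶠ Y in 𝓝 (c p), AnalyticAt 𝕜 (ψ p) Y ∧
      ∀ q, c q = Y → q ∈ S → ψ q =ᶠ[𝓝 (c q)] ψ p := by
    refine hp.eventually_analyticAt.and ?_
    rw [eventually_nhdsWithin_iff, hc.nhds_eq_comap, eventually_comap] at hcoh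
    exact hcoh
  obtain ⟨r, hr, hrball⟩ := Metric.eventually_nhds_iff_ball.1 hball
  exact ⟨r, hr, fun Y hY => (hrball Y hY).1, fun q hq hcq => (hrball _ hcq).2 q rfl hq⟩

/- Around `c p` use `ψ p`. On the overlap of two half-radius balls the smaller centre lies in the
full ball of the larger one, so the two germs agree there and hence, by the identity theorem, on
the convex intersection. -/
theorem exists_glue_of_coherent_germs (hc : IsInducing c)
    (hψ : ∀ p ∈ S, AnalyticAt 𝕜 (ψ p) (c p))
    (hcoh : ∀ p ∈ S, ∀ᶠ q in 𝓝[S] p, ψ q =ᶠ[𝓝 (c q)] ψ p) :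
    ∃ φ : E → F, ∀ p ∈ S, φ =ᶠ[𝓝 (c p)] ψ p := by
  classical
  choose! r hr han hagree using fun p hp =>
    exists_radius_of_coherent_germs hc (hψ p hp) (hcoh p hp)
  have hoverlap {p q : α} {Y : E} (hp : p ∈ S) (hq : q ∈ S) (hqp : r q ≤ r p)
      (hYp : dist Y (c p) < r p / 2) (hYq : dist Y (c q) < r q / 2) : ψ p Y = ψ q Y := by
    have hdist : dist (c q) (c p) < r p := by
      linarith [dist_triangle_left (c q) (c p) Y]
    exact analyticOnNhd_eqOn_of_mem_balls (han p hp) (han q hq) hdist (mem_ball_self (hr q hq))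
      (hagree p hp q hq hdist).symm (by rw [mem_ball]; linarith [hr p hp])
      (by rw [mem_ball]; linarith [hr q hq])
  have hcommon {p q : α} {Y : E} (hp : p ∈ S) (hq : q ∈ S) (hYp : dist Y (c p) < r p / 2)
      (hYq : dist Y (c q) < r q / 2) : ψ p Y = ψ q Y :=
    (le_total (r q) (r p)).elim (fun h => hoverlap hp hq h hYp hYq)
      fun h => (hoverlap hq hp h hYq hYp).symm
  refine ⟨fun Y => if h : ∃ q ∈ S, dist Y (c q) < r q / 2 then ψ h.choose Y else 0,
    fun p hp => ?_⟩
  filter_upwards [ball_mem_nhds (c p) (half_pos (hr p hp))] with Y hY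
  have hex : ∃ q ∈ S, dist Y (c q) < r q / 2 := ⟨p, hp, hY⟩
  rw [dif_pos hex]
  exact hcommon hex.choose_spec.1 hp hex.choose_spec.2 hY

end Gluing

section Complexification

open Filter Topology Metric

variable {ι E : Type*} [NormedAddCommGroup E] [NormedSpace ℂ E]

variable (ι) in
/-- The inclusion `ℝⁿ → ℂⁿ` as a continuous real-linear map. -/
def ofRealPi : (ι → ℝ) →L[ℝ] (ι → ℂ) := ContinuousLinearMap.piMap fun _ => Complex.ofRealCLM

lemma ofRealPi_apply (x : ι → ℝ) (i : ι) : ofRealPi ι x i = x i := rfl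

variable [Fintype ι]

lemma isometry_ofRealPi : Isometry (ofRealPi ι) := Isometry.piMap _ fun _ => Complex.isometry_ofReal

lemma dist_add_smul_ofRealPi_le (x : ι → ℝ) (z : ι → ℂ) {t : ℂ} (ht : ‖t‖ ≤ 2) :
    dist (ofRealPi ι (fun i => (z i).re) + t • ofRealPi ι fun i => (z i).im) (ofRealPi ι x)
      ≤ 3 * dist z (ofRealPi ι x) := by
  refine (dist_pi_le_iff (by positivity)).2 fun i => ?_
  have hi : ‖z i - x i‖ ≤ dist z (ofRealPi ι x) := by
    rw [← ofRealPi_apply, ← dist_eq_norm]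
    exact dist_le_pi_dist _ _ i
  have hre : ‖(((z i).re - x i : ℝ) : ℂ)‖ ≤ ‖z i - x i‖ := by
    rw [Complex.norm_real]
    simpa using Complex.abs_re_le_norm (z i - x i)
  have him : ‖((z i).im : ℂ)‖ ≤ ‖z i - x i‖ := by
    rw [Complex.norm_real]
    simpa using Complex.abs_im_le_norm (z i - x i)
  calc dist ((z i).re + t * (z i).im) (x i : ℂ)
      = ‖(((z i).re - x i : ℝ) : ℂ) + t * (z i).im‖ := by
        rw [dist_eq_norm, Complex.ofReal_sub]
        ring_nf
    _ ≤ ‖(((z i).re - x i : ℝ) : ℂ)‖ + ‖t‖ * ‖((z i).im : ℂ)‖ := by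
        rw [← norm_mul]
        exact norm_add_le _ _
    _ ≤ dist z (ofRealPi ι x) + 2 * dist z (ofRealPi ι x) := by
        gcongr
        exacts [hre.trans hi, him.trans hi]
    _ = 3 * dist z (ofRealPi ι x) := by ring

/- On the complex line `t ↦ re z + t • im z` the function vanishes at small real `t`, hence also
at `t = I`, where the line passes through `z`. -/
theorem eventually_eq_zero_of_ofRealPi [CompleteSpace E] {G : (ι → ℂ) → E} {x : ι → ℝ}
    (hG : AnalyticAt ℂ G (ofRealPi ι x)) (hzero : ∀ᶠ y in 𝓝 x, G (ofRealPi ι y) = 0) :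
    ∀ᶠ z in 𝓝 (ofRealPi ι x), G z = 0 := by
  rw [isometry_ofRealPi.isUniformInducing.isInducing.nhds_eq_comap, eventually_comap] at hzero
  obtain ⟨r, hr, hball⟩ := eventually_nhds_iff_ball.1 (hG.eventually_analyticAt.and hzero)
  filter_upwards [ball_mem_nhds (ofRealPi ι x) (ε := r / 3) (by positivity)] with z hz
  set a : ι → ℝ := fun i => (z i).re
  set b : ι → ℝ := fun i => (z i).im
  have hline {t : ℂ} (ht : t ∈ ball (0 : ℂ) 2) :
      ofRealPi ι a + t • ofRealPi ι b ∈ ball (ofRealPi ι x) r := by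
    have ht2 : ‖t‖ ≤ 2 := (mem_ball_zero_iff.1 ht).le
    have hz3 : dist z (ofRealPi ι x) < r / 3 := hz
    rw [mem_ball]
    linarith [dist_add_smul_ofRealPi_le x z ht2]
  have hana : AnalyticOnNhd ℂ (fun t : ℂ => G (ofRealPi ι a + t • ofRealPi ι b)) (ball 0 2) :=
    fun t ht => (hball _ (hline ht)).1.fun_comp
      (f := fun t : ℂ => ofRealPi ι a + t • ofRealPi ι b) (by fun_prop)
  have hreal : ∀ᶠ t : ℝ in 𝓝[≠] 0, G (ofRealPi ι a + (t : ℂ) • ofRealPi ι b) = 0 := by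
    filter_upwards [mem_nhdsWithin_of_mem_nhds (ball_mem_nhds (0 : ℝ) two_pos)] with t ht
    have htc : (t : ℂ) ∈ ball (0 : ℂ) 2 := by simpa using ht
    have hab : ofRealPi ι (a + t • b) = ofRealPi ι a + (t : ℂ) • ofRealPi ι b := by simp
    rw [← hab]
    exact (hball _ (hline htc)).2 _ hab
  have hfreq : ∃ᶠ t : ℂ in 𝓝[≠] 0, G (ofRealPi ι a + t • ofRealPi ι b) = 0 := by
    have htendsto : Tendsto ((↑) : ℝ → ℂ) (𝓝[≠] 0) (𝓝[≠] 0) :=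
      Complex.continuous_ofReal.continuousAt.continuousWithinAt.tendsto_nhdsWithin
        fun t ht => by simpa using ht
    exact htendsto.frequently hreal.frequently
  have hI : G (ofRealPi ι a + Complex.I • ofRealPi ι b) = 0 :=
    hana.eqOn_zero_of_preconnected_of_frequently_eq_zero (convex_ball 0 2).isPreconnected
      (mem_ball_self two_pos) hfreq (by simp)
  have hz_eq : ofRealPi ι a + Complex.I • ofRealPi ι b = z := by
    ext i
    simp [a, b, ofRealPi_apply, mul_comm Complex.I, Complex.re_add_im]
  rwa [hz_eq] at hI

section

variable [DecidableEq ι]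

/-- The power series in complex variables with the same coefficients as `p`. -/
def complexifySeries (p : FormalMultilinearSeries ℝ (ι → ℝ) E) :
    FormalMultilinearSeries ℂ (ι → ℂ) E := fun k =>
  ∑ s : Fin k → ι, ((ContinuousMultilinearMap.mkPiAlgebra ℂ (Fin k) ℂ).compContinuousLinearMap
    fun l => ContinuousLinearMap.proj (R := ℂ) (φ := fun _ : ι => ℂ) (s l)).smulRight
      (p k fun l => Pi.single (s l) 1)

variable (p : FormalMultilinearSeries ℝ (ι → ℝ) E)

lemma complexifySeries_apply (k : ℕ) (w : Fin k → ι → ℂ) : complexifySeries p k w =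
    ∑ s : Fin k → ι, (∏ l, w l (s l)) • p k fun l => Pi.single (s l) 1 := by
  simp [complexifySeries]

lemma complexifySeries_ofRealPi (k : ℕ) (v : Fin k → ι → ℝ) :
    complexifySeries p k (fun l => ofRealPi ι (v l)) = p k v := by
  have hv : v = fun l => ∑ i, v l i • (Pi.single i 1 : ι → ℝ) := by
    ext l j
    simp [Finset.sum_apply, Pi.single_apply]
  conv_rhs => rw [hv, ContinuousMultilinearMap.map_sum]
  rw [complexifySeries_apply]
  refine Finset.sum_congr rfl fun s _ => ?_
  simp only [ContinuousMultilinearMap.map_smul_univ, ofRealPi_apply, ← Complex.ofReal_prod,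
    Complex.coe_smul]

lemma norm_complexifySeries_le (k : ℕ) :
    ‖complexifySeries p k‖ ≤ (Fintype.card ι : ℝ) ^ k * ‖p k‖ := by
  refine ContinuousMultilinearMap.opNorm_le_bound (by positivity) fun w => ?_
  have hterm (s : Fin k → ι) :
      ‖(∏ l, w l (s l)) • p k fun l => Pi.single (s l) 1‖ ≤ ‖p k‖ * ∏ l, ‖w l‖ := by
    have hp : ‖p k fun l => Pi.single (s l) 1‖ ≤ ‖p k‖ := by
      simpa [Pi.norm_single] using (p k).le_opNorm fun l => Pi.single (s l) (1 : ℝ)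
    rw [norm_smul, norm_prod, mul_comm]
    gcongr
    exact norm_le_pi_norm _ _
  calc ‖complexifySeries p k w‖ ≤ ∑ _s : Fin k → ι, ‖p k‖ * ∏ l, ‖w l‖ := by
        rw [complexifySeries_apply]
        exact norm_sum_le_of_le _ fun s _ => hterm s
    _ = (Fintype.card ι : ℝ) ^ k * ‖p k‖ * ∏ l, ‖w l‖ := by simp [mul_assoc]

lemma complexifySeries_radius_pos (hp : 0 < p.radius) : 0 < (complexifySeries p).radius := by
  obtain ⟨r, hr0, hr⟩ := ENNReal.lt_iff_exists_nnreal_btwn.1 hp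
  obtain ⟨C, -, hC⟩ := p.norm_mul_pow_le_of_lt_radius hr
  have hr' : 0 < r / (Fintype.card ι + 1) := div_pos (ENNReal.coe_pos.1 hr0) (by positivity)
  refine (ENNReal.coe_pos.2 hr').trans_le ((complexifySeries p).le_radius_of_bound C fun k => ?_)
  calc ‖complexifySeries p k‖ * ((r / (Fintype.card ι + 1) : NNReal) : ℝ) ^ k
      ≤ ((Fintype.card ι + 1 : ℝ) ^ k * ‖p k‖) * (r / (Fintype.card ι + 1) : ℝ) ^ k := by
        push_cast
        gcongr
        refine (norm_complexifySeries_le p k).trans ?_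
        gcongr
        linarith
    _ = ‖p k‖ * r ^ k := by
        rw [div_pow]
        field_simp
    _ ≤ C := hC k

end

variable [CompleteSpace E] {f : (ι → ℝ) → E}

lemma exists_complexification_at {x : ι → ℝ} (hf : AnalyticAt ℝ f x) :
    ∃ G : (ι → ℂ) → E, AnalyticAt ℂ G (ofRealPi ι x) ∧ ∀ᶠ y in 𝓝 x, G (ofRealPi ι y) = f y := by
  classical
  obtain ⟨p, r, hp⟩ := hf
  have hq := (complexifySeries p).hasFPowerSeriesOnBall
    (complexifySeries_radius_pos p (hp.r_pos.trans_le hp.r_le))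
  refine ⟨fun z => (complexifySeries p).sum (z - ofRealPi ι x), ?_, ?_⟩
  · refine AnalyticAt.comp (g := (complexifySeries p).sum) ?_ (by fun_prop)
    rw [sub_self]
    exact hq.analyticAt
  · filter_upwards [hp.eventually_hasSum_sub] with y hy
    rw [FormalMultilinearSeries.sum, ← hy.tsum_eq, ← map_sub]
    exact tsum_congr fun k => complexifySeries_ofRealPi p k fun _ => y - x

theorem exists_complexification {A : Set (ι → ℝ)} (hf : AnalyticOnNhd ℝ f A) :
    ∃ G : (ι → ℂ) → E, ∀ x ∈ A,
      AnalyticAt ℂ G (ofRealPi ι x) ∧ ∀ᶠ y in 𝓝 x, G (ofRealPi ι y) = f y := by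
  choose! Ψ hΨ hΨf using fun x hx => exists_complexification_at (hf x hx)
  have hcont : Continuous (ofRealPi ι) := (ofRealPi ι).continuous
  have hcoh : ∀ x ∈ A, ∀ᶠ y in 𝓝[A] x, Ψ y =ᶠ[𝓝 (ofRealPi ι y)] Ψ x := by
    intro x hx
    filter_upwards [self_mem_nhdsWithin,
      mem_nhdsWithin_of_mem_nhds (hcont.continuousAt.eventually (hΨ x hx).eventually_analyticAt),
      mem_nhdsWithin_of_mem_nhds (hΨf x hx).eventually_nhds] with y hy hana heq
    have hdiff : ∀ᶠ y' in 𝓝 y, (Ψ y - Ψ x) (ofRealPi ι y') = 0 := by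
      filter_upwards [hΨf y hy, heq] with y' h h'
      rw [Pi.sub_apply, h, h', sub_self]
    exact (eventually_eq_zero_of_ofRealPi ((hΨ y hy).sub hana) hdiff).mono
      fun z hz => sub_eq_zero.1 hz
  obtain ⟨G, hG⟩ := exists_glue_of_coherent_germs
    isometry_ofRealPi.isUniformInducing.isInducing hΨ hcoh
  refine ⟨G, fun x hx => ⟨(hΨ x hx).congr (hG x hx).symm, ?_⟩⟩
  filter_upwards [hcont.continuousAt.eventually (hG x hx), hΨf x hx] with y hGy hΨy
  rw [hGy, hΨy]

end Complexification

section ImplicitTranslation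

open Filter Topology
open scoped ContDiff

variable {P V : Type*} [NormedAddCommGroup P] [NormedSpace ℝ P]
  [NormedAddCommGroup V] [NormedSpace ℂ V] {c : P → ℂ} {b : P → V} {U : V → V}

lemma analyticAt_implicitTranslation {s : P × V} (hc : AnalyticAt ℝ c s.1)
    (hb : AnalyticAt ℝ b s.1) (hU : AnalyticAt ℂ U s.2) :
    AnalyticAt ℝ (fun w : P × V => w.2 + c w.1 • U w.2 - b w.1) s :=
  (analyticAt_snd.add ((hc.comp analyticAt_fst).smul
    (hU.restrictScalars.comp analyticAt_snd))).sub (hb.comp analyticAt_fst)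

variable [CompleteSpace P] [CompleteSpace V]

lemma exists_implicitTranslation_at {s : P} (hc : AnalyticAt ℝ c s) (hb : AnalyticAt ℝ b s)
    (hcs : c s = 0) (hU : AnalyticAt ℂ U (b s)) :
    ∃ y : P → V, AnalyticAt ℝ y s ∧ y s = b s ∧
      ∀ᶠ w in 𝓝 (s, b s), w.2 + c w.1 • U w.2 = b w.1 ↔ y w.1 = w.2 := by
  set Φ : P × V → V := fun w => w.2 + c w.1 • U w.2 - b w.1
  have hΦ : AnalyticAt ℝ Φ (s, b s) := analyticAt_implicitTranslation hc hb hU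
  have hΦ0 : Φ (s, b s) = 0 := by simp [Φ, hcs]
  have hpartial : fderiv ℝ Φ (s, b s) ∘L .inr ℝ P V = .id ℝ V := by
    have hslice : Φ ∘ (fun z => (s, z)) = fun z => z - b s := by
      ext z
      simp [Φ, hcs]
    have hcomp := hΦ.differentiableAt.hasFDerivAt.comp (b s) (hasFDerivAt_prodMk_right s (b s))
    rw [hslice] at hcomp
    exact hcomp.unique ((hasFDerivAt_id (b s)).sub_const (b s))
  have hinv : (fderiv ℝ Φ (s, b s) ∘L .inr ℝ P V).IsInvertible := by
    rw [hpartial]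
    exact ⟨.refl ℝ V, rfl⟩
  have hsmooth : ContDiffAt ℝ ω Φ (s, b s) := hΦ.contDiffAt
  have hω : (ω : WithTop ℕ∞) ≠ 0 := by simp
  refine ⟨hsmooth.implicitFunction hω hinv,
    (hsmooth.contDiffAt_implicitFunction hω hinv).analyticAt,
    hsmooth.implicitFunction_apply_self hω hinv, ?_⟩
  filter_upwards [hsmooth.eventually_apply_eq_iff_implicitFunction hω hinv] with w hw
  rw [← hw, hΦ0, sub_eq_zero]

theorem exists_implicitTranslation {T : Set P} (hc : AnalyticOnNhd ℝ c T)
    (hb : AnalyticOnNhd ℝ b T) (hcT : ∀ s ∈ T, c s = 0) (hU : ∀ s ∈ T, AnalyticAt ℂ U (b s)) :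
    ∃ y : P → V, ∀ s ∈ T, AnalyticAt ℝ y s ∧ y s = b s ∧
      ∀ᶠ Y in 𝓝 s, y Y + c Y • U (y Y) = b Y := by
  choose! ψ hψ hψs hψiff using fun s hs =>
    exists_implicitTranslation_at (hc s hs) (hb s hs) (hcT s hs) (hU s hs)
  have hgraph {s : P} (hs : s ∈ T) : Tendsto (fun Y => (Y, ψ s Y)) (𝓝 s) (𝓝 (s, b s)) := by
    have hcont := continuousAt_id.prodMk (hψ s hs).continuousAt
    rwa [ContinuousAt, id, hψs s hs] at hcont
  have hsolve {s : P} (hs : s ∈ T) : ∀ᶠ Y in 𝓝 s, ψ s Y + c Y • U (ψ s Y) = b Y := by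
    filter_upwards [(hgraph hs).eventually (hψiff s hs)] with Y hY
    exact hY.2 rfl
  have hcoh : ∀ s ∈ T, ∀ᶠ t in 𝓝[T] s, ψ t =ᶠ[𝓝 t] ψ s := by
    intro s hs
    have hbs : Tendsto (fun t => (t, b t)) (𝓝 s) (𝓝 (s, b s)) :=
      continuousAt_id.prodMk (hb s hs).continuousAt
    filter_upwards [self_mem_nhdsWithin, mem_nhdsWithin_of_mem_nhds
      (hbs.eventually (hψiff s hs).eventually_nhds)] with t ht htiff
    filter_upwards [(hgraph ht).eventually htiff, hsolve ht] with Y hiff hsol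
    exact (hiff.1 hsol).symm
  obtain ⟨y, hy⟩ := exists_glue_of_coherent_germs .id hψ hcoh
  refine ⟨y, fun s hs => ⟨(hψ s hs).congr (hy s hs).symm, (hy s hs).eq_of_nhds.trans (hψs s hs),
    ?_⟩⟩
  filter_upwards [hy s hs, hsolve hs] with Y hY hsol
  rwa [hY]

end ImplicitTranslation

section StructureEquation

open Matrix Complex Filter Topology

/-- Near `z`, the function `F` is a complexified horizontally conformal submersion of `ℂ³` and `U`
is a field of vectors tangent to its fibres, of unit length for the bilinear form `⬝ᵥ`. -/
structure IsConformalPairAt (F : (Fin 3 → ℂ) → ℂ) (U : (Fin 3 → ℂ) → Fin 3 → ℂ)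
    (z : Fin 3 → ℂ) : Prop where
  analyticAt_left : AnalyticAt ℂ F z
  analyticAt_right : AnalyticAt ℂ U z
  conformal : ∀ᶠ ζ in 𝓝 z, grad ℂ F ζ ⬝ᵥ grad ℂ F ζ = 0
  unit : ∀ᶠ ζ in 𝓝 z, U ζ ⬝ᵥ U ζ = 1
  tangent : ∀ᶠ ζ in 𝓝 z, U ζ ⬝ᵥ grad ℂ F ζ = 0
  grad_ne_zero : grad ℂ F z ≠ 0

namespace IsConformalPairAt

variable {F : (Fin 3 → ℂ) → ℂ} {U : (Fin 3 → ℂ) → Fin 3 → ℂ} {z : Fin 3 → ℂ}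

lemma eventually (h : IsConformalPairAt F U z) : ∀ᶠ ζ in 𝓝 z, IsConformalPairAt F U ζ := by
  filter_upwards [h.analyticAt_left.eventually_analyticAt,
    h.analyticAt_right.eventually_analyticAt, h.conformal.eventually_nhds,
    h.unit.eventually_nhds, h.tangent.eventually_nhds,
    (analyticAt_grad h.analyticAt_left).continuousAt.eventually_ne h.grad_ne_zero]
    with ζ hF hU hFF hUU hUF h0
  exact ⟨hF, hU, hFF, hUU, hUF, h0⟩

lemma vecMul_jacobian_right_self (h : IsConformalPairAt F U z) :
    U z ᵥ* jacobian ℂ U z = 0 :=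
  vecMul_jacobian_self_eq_zero_of_dotProduct_const h.analyticAt_right.differentiableAt h.unit

lemma exists_grad_vecMul_jacobian (h : IsConformalPairAt F U z) :
    ∃ a b : ℂ, grad ℂ F z ᵥ* jacobian ℂ U z = a • grad ℂ F z + b • U z := by
  have hgrad := (analyticAt_grad h.analyticAt_left).differentiableAt
  have hhess : grad ℂ F z ᵥ* jacobian ℂ (grad ℂ F) z = 0 :=
    vecMul_jacobian_self_eq_zero_of_dotProduct_const hgrad h.conformal
  have hskew : U z ᵥ* jacobian ℂ (grad ℂ F) z = -(grad ℂ F z ᵥ* jacobian ℂ U z) :=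
    vecMul_jacobian_eq_neg_of_dotProduct_const h.analyticAt_right.differentiableAt hgrad h.tangent
  have horth : grad ℂ F z ⬝ᵥ (grad ℂ F z ᵥ* jacobian ℂ U z) = 0 := by
    rw [← neg_eq_zero, ← dotProduct_neg, ← hskew, ← mulVec_transpose,
      (isSymm_jacobian_grad h.analyticAt_left).eq, dotProduct_mulVec, hhess, zero_dotProduct]
  exact exists_eq_smul_add_smul_of_null I_mul_I h.grad_ne_zero h.conformal.self_of_nhds
    h.unit.self_of_nhds h.tangent.self_of_nhds horth

end IsConformalPairAt

end StructureEquation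

section Foot

open Matrix Complex Filter Topology

/-- Near `Y = (x₀, x)`, the map `y` is a real-analytic solution of `y + i x₀ U(y) = x`: the point
`x ∈ ℝ³ ⊂ ℂ³` lies at signed distance `i x₀` from the foot `y` along `U(y)`. -/
structure IsFootAt (U : (Fin 3 → ℂ) → Fin 3 → ℂ) (y : (Fin 4 → ℝ) → Fin 3 → ℂ)
    (Y : Fin 4 → ℝ) : Prop where
  analyticAt : AnalyticAt ℝ y Y
  add_smul_eq : ∀ᶠ W in 𝓝 Y, y W + (I * W 0) • U (y W) = ofRealPi (Fin 3) (Fin.tail W)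

/-- The null vector `(1, i U(y))`, which spans with the gradient of `F ∘ y` a totally isotropic
plane of `ℂ⁴`. -/
def nullNormal (U : (Fin 3 → ℂ) → Fin 3 → ℂ) (y : (Fin 4 → ℝ) → Fin 3 → ℂ)
    (Y : Fin 4 → ℝ) : Fin 4 → ℂ :=
  Fin.cons 1 (I • U (y Y))

section NullNormal

variable {U : (Fin 3 → ℂ) → Fin 3 → ℂ} {y : (Fin 4 → ℝ) → Fin 3 → ℂ} {Y : Fin 4 → ℝ}

lemma nullNormal_dotProduct_self (hU : U (y Y) ⬝ᵥ U (y Y) = 1) :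
    nullNormal U y Y ⬝ᵥ nullNormal U y Y = 0 := by
  rw [nullNormal, fin_cons_dotProduct_cons, smul_dotProduct, dotProduct_smul, hU, smul_smul,
    I_mul_I]
  norm_num

lemma nullNormal_dotProduct_cons {v : Fin 3 → ℂ} (hv : U (y Y) ⬝ᵥ v = 0) :
    nullNormal U y Y ⬝ᵥ (Fin.cons 0 v : Fin 4 → ℂ) = 0 := by
  rw [nullNormal, fin_cons_dotProduct_cons, smul_dotProduct, hv, smul_zero, mul_zero, add_zero]

end NullNormal

lemma analyticAt_ofRealPi_tail {n : ℕ} {Y : Fin (n + 1) → ℝ} :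
    AnalyticAt ℝ (fun W : Fin (n + 1) → ℝ => ofRealPi (Fin n) (Fin.tail W)) Y :=
  (ofRealPi (Fin n) ∘L
    .pi fun k => .proj (R := ℝ) (φ := fun _ : Fin (n + 1) => ℝ) k.succ).analyticAt Y

lemma grad_dotProduct_ofRealPi_tail {n : ℕ} (v : Fin n → ℂ) {Y : Fin (n + 1) → ℝ} :
    grad ℝ (fun W : Fin (n + 1) → ℝ => v ⬝ᵥ ofRealPi (Fin n) (Fin.tail W)) Y = Fin.cons 0 v := by
  have hcoord (k : Fin n) :
      jacobian ℝ (fun W : Fin (n + 1) → ℝ => ofRealPi (Fin n) (Fin.tail W)) Y k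
        = Pi.single k.succ 1 :=
    grad_algebraMap_coord k.succ
  ext i
  rw [← vecMul_jacobian v analyticAt_ofRealPi_tail.differentiableAt, vecMul, dotProduct]
  cases i using Fin.cases <;> simp [hcoord, Pi.single_apply]

namespace IsFootAt

variable {F : (Fin 3 → ℂ) → ℂ} {U : (Fin 3 → ℂ) → Fin 3 → ℂ} {y : (Fin 4 → ℝ) → Fin 3 → ℂ}
  {Y : Fin 4 → ℝ}

lemma eventually (hy : IsFootAt U y Y) : ∀ᶠ W in 𝓝 Y, IsFootAt U y W := by
  filter_upwards [hy.analyticAt.eventually_analyticAt, hy.add_smul_eq.eventually_nhds] with W h h'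
  exact ⟨h, h'⟩

lemma differentiableAt_right_comp (hy : IsFootAt U y Y) (hU : AnalyticAt ℂ U (y Y)) :
    DifferentiableAt ℝ (fun W => U (y W)) Y :=
  (hU.restrictScalars.comp hy.analyticAt).differentiableAt

lemma grad_dotProduct_right_comp (hy : IsFootAt U y Y) (hU : AnalyticAt ℂ U (y Y))
    (v : Fin 3 → ℂ) :
    grad ℝ (fun W => v ⬝ᵥ U (y W)) Y = v ᵥ* jacobian ℂ U (y Y) ᵥ* jacobian ℝ y Y := by
  rw [← vecMul_jacobian v (hy.differentiableAt_right_comp hU),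
    jacobian_comp hU.differentiableAt hy.analyticAt.differentiableAt, vecMul_vecMul]

/- The differential of the equation `y + i x₀ U(y) = x`, paired with `v`. -/
lemma vecMul_jacobian_add (hy : IsFootAt U y Y) (hU : AnalyticAt ℂ U (y Y)) (v : Fin 3 → ℂ) :
    v ᵥ* jacobian ℝ y Y + (I * Y 0) • (v ᵥ* jacobian ℂ U (y Y) ᵥ* jacobian ℝ y Y)
      + Pi.single 0 (I * (v ⬝ᵥ U (y Y))) = Fin.cons 0 v := by
  have hyd := hy.analyticAt.differentiableAt
  have hvU := differentiableAt_const_dotProduct v (hy.differentiableAt_right_comp hU)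
  have hcoord : DifferentiableAt ℝ (fun W : Fin 4 → ℝ => (W 0 : ℂ)) Y := by fun_prop
  have hheight : grad ℝ (fun W : Fin 4 → ℝ => I * (W 0 : ℂ)) Y = Pi.single 0 I := by
    rw [grad_const_mul I hcoord]
    refine (congrArg (I • ·) (grad_algebraMap_coord (𝕜 := ℝ) (𝕂 := ℂ) 0)).trans ?_
    rw [← Pi.single_smul, smul_eq_mul, mul_one]
  rw [← grad_dotProduct_ofRealPi_tail v,
    ← grad_congr (hy.add_smul_eq.mono fun W hW => congrArg (v ⬝ᵥ ·) hW)]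
  simp only [dotProduct_add, dotProduct_smul, smul_eq_mul]
  rw [grad_add (differentiableAt_const_dotProduct v hyd) ((hcoord.const_mul I).fun_mul hvU),
    grad_mul (hcoord.const_mul I) hvU, hheight, hy.grad_dotProduct_right_comp hU,
    ← vecMul_jacobian v hyd, ← Pi.single_smul, smul_eq_mul, mul_comm I (v ⬝ᵥ _), add_assoc]

variable (hy : IsFootAt U y Y) (hF : IsConformalPairAt F U (y Y))

include hy hF

lemma right_vecMul_jacobian :
    U (y Y) ᵥ* jacobian ℝ y Y = -I • nullNormal U y Y := by
  have h := hy.vecMul_jacobian_add hF.analyticAt_right (U (y Y))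
  rw [hF.vecMul_jacobian_right_self, hF.unit.self_of_nhds, zero_vecMul, smul_zero, add_zero,
    mul_one, ← eq_sub_iff_add_eq] at h
  ext i
  rw [h]
  cases i using Fin.cases <;> simp [nullNormal, ← mul_assoc]

lemma grad_left_comp :
    grad ℝ (fun W => F (y W)) Y = grad ℂ F (y Y) ᵥ* jacobian ℝ y Y :=
  grad_comp hF.analyticAt_left.differentiableAt hy.analyticAt.differentiableAt

lemma analyticAt_left_comp : AnalyticAt ℝ (fun W => F (y W)) Y :=
  hF.analyticAt_left.restrictScalars.comp hy.analyticAt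

lemma smul_grad_add_smul_nullNormal {a b : ℂ}
    (hab : grad ℂ F (y Y) ᵥ* jacobian ℂ U (y Y) = a • grad ℂ F (y Y) + b • U (y Y)) :
    (1 + I * Y 0 * a) • grad ℝ (fun W => F (y W)) Y + (Y 0 * b) • nullNormal U y Y
      = Fin.cons 0 (grad ℂ F (y Y)) := by
  have h := hy.vecMul_jacobian_add hF.analyticAt_right (grad ℂ F (y Y))
  rw [hab, add_vecMul, smul_vecMul, smul_vecMul, hy.right_vecMul_jacobian hF,
    ← hy.grad_left_comp hF, dotProduct_comm, hF.tangent.self_of_nhds, mul_zero, Pi.single_zero,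
    add_zero] at h
  have hI : (Y 0 * b : ℂ) = I * Y 0 * b * -I := by linear_combination (Y 0 * b : ℂ) * I_mul_I
  rw [← h, hI]
  module

section

variable {a b : ℂ}
  (hab : grad ℂ F (y Y) ᵥ* jacobian ℂ U (y Y) = a • grad ℂ F (y Y) + b • U (y Y))

include hab

lemma height_mul_eq :
    Y 0 * b = -(1 + I * Y 0 * a) * grad ℝ (fun W => F (y W)) Y 0 := by
  have h := congrFun (hy.smul_grad_add_smul_nullNormal hF hab) 0
  simp only [nullNormal, Pi.add_apply, Pi.smul_apply, Fin.cons_zero, smul_eq_mul, mul_one] at h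
  linear_combination h

lemma one_add_ne_zero : 1 + I * Y 0 * a ≠ 0 := by
  intro hc
  have h := hy.smul_grad_add_smul_nullNormal hF hab
  rw [hy.height_mul_eq hF hab, hc, neg_zero, zero_mul, zero_smul, zero_smul, add_zero] at h
  exact hF.grad_ne_zero (funext fun i => (congrFun h i.succ).symm)

end

lemma nullNormal_dotProduct_grad :
    nullNormal U y Y ⬝ᵥ grad ℝ (fun W => F (y W)) Y = 0 := by
  obtain ⟨a, b, hab⟩ := hF.exists_grad_vecMul_jacobian
  have h := congrArg (nullNormal U y Y ⬝ᵥ ·) (hy.smul_grad_add_smul_nullNormal hF hab)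
  simpa [dotProduct_add, nullNormal_dotProduct_self hF.unit.self_of_nhds,
    nullNormal_dotProduct_cons hF.tangent.self_of_nhds, hy.one_add_ne_zero hF hab] using h

lemma grad_dotProduct_self :
    grad ℝ (fun W => F (y W)) Y ⬝ᵥ grad ℝ (fun W => F (y W)) Y = 0 := by
  obtain ⟨a, b, hab⟩ := hF.exists_grad_vecMul_jacobian
  have hxi : (Fin.cons 0 (grad ℂ F (y Y)) : Fin 4 → ℂ) ⬝ᵥ Fin.cons 0 (grad ℂ F (y Y)) = 0 := by
    rw [fin_cons_dotProduct_cons, hF.conformal.self_of_nhds, mul_zero, add_zero]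
  rw [← hy.smul_grad_add_smul_nullNormal hF hab] at hxi
  simpa [dotProduct_add, add_dotProduct, nullNormal_dotProduct_self hF.unit.self_of_nhds,
    hy.nullNormal_dotProduct_grad hF, dotProduct_comm _ (nullNormal U y Y),
    hy.one_add_ne_zero hF hab] using hxi

lemma linearIndependent_grad_nullNormal :
    LinearIndependent ℂ ![grad ℝ (fun W => F (y W)) Y, nullNormal U y Y] := by
  obtain ⟨a, b, hab⟩ := hF.exists_grad_vecMul_jacobian
  have h := hy.smul_grad_add_smul_nullNormal hF hab
  refine linearIndependent_fin2.2 ⟨fun h0 => ?_, fun t ht => ?_⟩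
  · simpa [nullNormal] using congrFun h0 0
  · replace ht : t • nullNormal U y Y = grad ℝ (fun W => F (y W)) Y := ht
    rw [← ht, smul_smul, ← add_smul] at h
    have hs : (1 + I * Y 0 * a) * t + Y 0 * b = 0 := by simpa [nullNormal] using congrFun h 0
    rw [hs, zero_smul] at h
    exact hF.grad_ne_zero (funext fun i => (congrFun h i.succ).symm)

lemma eventually_isConformalPairAt :
    ∀ᶠ W in 𝓝 Y, IsConformalPairAt F U (y W) ∧ IsFootAt U y W :=
  (hy.analyticAt.continuousAt.eventually hF.eventually).and hy.eventually

lemma differentiableAt_nullNormal : DifferentiableAt ℝ (nullNormal U y) Y := by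
  have hU := (hy.differentiableAt_right_comp hF.analyticAt_right)
  refine differentiableAt_pi.2 fun i => ?_
  cases i using Fin.cases with
  | zero => exact differentiableAt_const 1
  | succ k => exact (differentiableAt_pi.1 hU k).const_smul I

lemma cons_vecMul_jacobian_nullNormal (s : ℂ) (v : Fin 3 → ℂ) :
    (Fin.cons s v : Fin 4 → ℂ) ᵥ* jacobian ℝ (nullNormal U y) Y
      = I • (v ᵥ* jacobian ℂ U (y Y) ᵥ* jacobian ℝ y Y) := by
  have hvU := differentiableAt_const_dotProduct v
    (hy.differentiableAt_right_comp hF.analyticAt_right)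
  rw [vecMul_jacobian _ (hy.differentiableAt_nullNormal hF),
    ← hy.grad_dotProduct_right_comp hF.analyticAt_right]
  simp only [nullNormal, fin_cons_dotProduct_cons, mul_one, dotProduct_smul, smul_eq_mul]
  rw [← grad_const_mul I hvU]
  ext i
  rw [grad, fderiv_const_add, grad]

lemma nullNormal_vecMul_jacobian :
    nullNormal U y Y ᵥ* jacobian ℝ (nullNormal U y) Y = 0 :=
  vecMul_jacobian_self_eq_zero_of_dotProduct_const (hy.differentiableAt_nullNormal hF) <|
    (hy.eventually_isConformalPairAt hF).mono fun _ hW =>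
      nullNormal_dotProduct_self hW.1.unit.self_of_nhds

lemma grad_vecMul_hessian :
    grad ℝ (fun W => F (y W)) Y ᵥ* jacobian ℝ (grad ℝ fun W => F (y W)) Y = 0 :=
  vecMul_jacobian_self_eq_zero_of_dotProduct_const
    (analyticAt_grad (hy.analyticAt_left_comp hF)).differentiableAt <|
    (hy.eventually_isConformalPairAt hF).mono fun _ hW => hW.2.grad_dotProduct_self hW.1

lemma nullNormal_vecMul_hessian :
    nullNormal U y Y ᵥ* jacobian ℝ (grad ℝ fun W => F (y W)) Y
      = -(grad ℝ (fun W => F (y W)) Y ᵥ* jacobian ℝ (nullNormal U y) Y) :=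
  vecMul_jacobian_eq_neg_of_dotProduct_const (hy.differentiableAt_nullNormal hF)
    (analyticAt_grad (hy.analyticAt_left_comp hF)).differentiableAt <|
    (hy.eventually_isConformalPairAt hF).mono fun _ hW => hW.2.nullNormal_dotProduct_grad hW.1

lemma smul_nullNormal_vecMul_hessian {a b : ℂ}
    (hab : grad ℂ F (y Y) ᵥ* jacobian ℂ U (y Y) = a • grad ℂ F (y Y) + b • U (y Y)) :
    (1 + I * Y 0 * a) • (nullNormal U y Y ᵥ* jacobian ℝ (grad ℝ fun W => F (y W)) Y)
      = -(I * a) • grad ℝ (fun W => F (y W)) Y - b • nullNormal U y Y := by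
  have h := congrArg (· ᵥ* jacobian ℝ (nullNormal U y) Y)
    (hy.smul_grad_add_smul_nullNormal hF hab)
  simp only [add_vecMul, smul_vecMul, hy.nullNormal_vecMul_jacobian hF, smul_zero, add_zero,
    hy.cons_vecMul_jacobian_nullNormal hF, hab, hy.right_vecMul_jacobian hF,
    ← hy.grad_left_comp hF] at h
  rw [hy.nullNormal_vecMul_hessian hF, smul_neg, h]
  have hI : b = I * b * -I := by linear_combination b * I_mul_I
  nth_rw 2 [hI]
  module

/- In the isotropic plane spanned by `p = ∇φ` and the null normal `N`, the Hessian `H` satisfies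
`p H = 0` and `x₀ N H ≡ p₀ N` modulo `p`. -/
theorem height_mul_trace_hessian :
    Y 0 * (jacobian ℝ (grad ℝ fun W => F (y W)) Y).trace
      = 2 * grad ℝ (fun W => F (y W)) Y 0 := by
  obtain ⟨a, b, hab⟩ := hF.exists_grad_vecMul_jacobian
  have hc := hy.one_add_ne_zero hF hab
  set p := grad ℝ (fun W => F (y W)) Y
  set H := jacobian ℝ (grad ℝ fun W => F (y W)) Y
  have hNH : nullNormal U y Y ᵥ* ((Y 0 : ℂ) • H)
      = (-(I * a * Y 0) / (1 + I * Y 0 * a)) • p + p 0 • nullNormal U y Y := by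
    rw [vecMul_smul, ← smul_right_inj hc, smul_comm, hy.smul_nullNormal_vecMul_hessian hF hab,
      smul_sub, smul_smul _ b, hy.height_mul_eq hF hab, smul_add,
      smul_smul (1 + I * Y 0 * a) _ p,
      mul_div_cancel₀ _ hc]
    module
  have htrace := trace_eq_two_mul_of_isotropic_pair (hy.grad_dotProduct_self hF)
    (by rw [dotProduct_comm, hy.nullNormal_dotProduct_grad hF])
    (nullNormal_dotProduct_self hF.unit.self_of_nhds) (hy.linearIndependent_grad_nullNormal hF)
    ((isSymm_jacobian_grad (hy.analyticAt_left_comp hF)).smul (Y 0 : ℂ)) (a := 0) (b := 0)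
    (by rw [vecMul_smul, hy.grad_vecMul_hessian hF, smul_zero, zero_smul, zero_smul, add_zero])
    hNH
  rwa [trace_smul, smul_eq_mul, zero_add] at htrace

end IsFootAt

end Foot

section Existence

open Matrix Complex Filter Topology

section Restriction

variable {ι : Type*}

lemma jacobian_ofRealPi [DecidableEq ι] (x : ι → ℝ) :
    jacobian ℝ (ofRealPi ι) x = (1 : Matrix ι ι ℂ) := by
  ext i j
  exact (congrFun (grad_algebraMap_coord i) j).trans
    (by simp only [Pi.single_apply, one_apply, eq_comm])

variable [Fintype ι]

lemma eventually_dotProduct_eq_of_ofRealPi {κ : Type*} [Fintype κ]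
    {a b : (ι → ℂ) → κ → ℂ} {x : ι → ℝ}
    (ha : AnalyticAt ℂ a (ofRealPi ι x)) (hb : AnalyticAt ℂ b (ofRealPi ι x)) {c : ℂ}
    (hab : ∀ᶠ y in 𝓝 x, a (ofRealPi ι y) ⬝ᵥ b (ofRealPi ι y) = c) :
    ∀ᶠ z in 𝓝 (ofRealPi ι x), a z ⬝ᵥ b z = c := by
  have hcoord (k : κ) := (ContinuousLinearMap.proj (R := ℂ) (φ := fun _ : κ => ℂ) k).analyticAt
  have hdot : AnalyticAt ℂ (fun z => a z ⬝ᵥ b z - c) (ofRealPi ι x) :=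
    (Finset.analyticAt_fun_sum _ fun k _ =>
      ((hcoord k _).comp ha).mul ((hcoord k _).comp hb)).sub analyticAt_const
  exact (eventually_eq_zero_of_ofRealPi hdot (hab.mono fun y hy => sub_eq_zero.2 hy)).mono
    fun z hz => sub_eq_zero.1 hz

lemma grad_eq_of_ofRealPi [DecidableEq ι] {F : (ι → ℂ) → ℂ} {f : (ι → ℝ) → ℂ} {x : ι → ℝ}
    (hF : AnalyticAt ℂ F (ofRealPi ι x)) (hFf : ∀ᶠ y in 𝓝 x, F (ofRealPi ι y) = f y) :
    grad ℂ F (ofRealPi ι x) = grad ℝ f x := by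
  rw [← grad_congr hFf, grad_comp hF.differentiableAt (ofRealPi ι).differentiableAt,
    jacobian_ofRealPi, vecMul_one]

end Restriction

theorem exists_isConformalPairAt {A : Set (Fin 3 → ℝ)} (hA : IsOpen A) {f : (Fin 3 → ℝ) → ℂ}
    (hf : AnalyticOnNhd ℝ f A) (hconf : ∀ x ∈ A, grad ℝ f x ⬝ᵥ grad ℝ f x = 0)
    (hgrad : ∀ x ∈ A, grad ℝ f x ≠ 0) :
    ∃ F U, ∀ x ∈ A, F (ofRealPi (Fin 3) x) = f x ∧ IsConformalPairAt F U (ofRealPi (Fin 3) x) := by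
  have hu : AnalyticOnNhd ℝ (fun x => unitTangent (grad ℝ f x)) A := fun x hx =>
    (analyticAt_unitTangent (hgrad x hx)).comp (analyticAt_grad (hf x hx))
  obtain ⟨F, hF⟩ := exists_complexification hf
  obtain ⟨U, hU⟩ := exists_complexification hu
  refine ⟨F, U, fun x hx => ⟨(hF x hx).2.self_of_nhds, ?_⟩⟩
  have hFx := (hF x hx).1
  have hUx := (hU x hx).1
  have hreal (y : Fin 3 → ℝ) (hy : y ∈ A) : grad ℂ F (ofRealPi (Fin 3) y) = grad ℝ f y ∧
      U (ofRealPi (Fin 3) y) = unitTangent (grad ℝ f y) :=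
    ⟨grad_eq_of_ofRealPi (hF y hy).1 (hF y hy).2, (hU y hy).2.self_of_nhds⟩
  have hmem : ∀ᶠ y in 𝓝 x, y ∈ A := hA.mem_nhds hx
  refine ⟨hFx, hUx,
    eventually_dotProduct_eq_of_ofRealPi (analyticAt_grad hFx) (analyticAt_grad hFx) ?_,
    eventually_dotProduct_eq_of_ofRealPi hUx hUx ?_,
    eventually_dotProduct_eq_of_ofRealPi hUx (analyticAt_grad hFx) ?_, ?_⟩
  · filter_upwards [hmem] with y hy
    rw [(hreal y hy).1, hconf y hy]
  · filter_upwards [hmem] with y hy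
    rw [(hreal y hy).2, unitTangent_dotProduct_self (hgrad y hy) (hconf y hy)]
  · filter_upwards [hmem] with y hy
    rw [(hreal y hy).1, (hreal y hy).2, unitTangent_dotProduct_left]
  · rw [(hreal x hx).1]
    exact hgrad x hx

theorem exists_isFootAt {A : Set (Fin 3 → ℝ)} {U : (Fin 3 → ℂ) → Fin 3 → ℂ}
    (hU : ∀ x ∈ A, AnalyticAt ℂ U (ofRealPi (Fin 3) x)) :
    ∃ y, ∀ x ∈ A, y (slice0 x) = ofRealPi (Fin 3) x ∧ IsFootAt U y (slice0 x) := by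
  have hheight : AnalyticOnNhd ℝ (fun Y : Fin 4 → ℝ => I * (Y 0 : ℂ)) (slice0 '' A) :=
    fun _ _ => analyticAt_const.mul
      ((ofRealCLM ∘L .proj (R := ℝ) (φ := fun _ : Fin 4 => ℝ) 0).analyticAt _)
  obtain ⟨y, hy⟩ := exists_implicitTranslation (U := U) hheight
    (fun _ _ => analyticAt_ofRealPi_tail)
    (Set.forall_mem_image.2 fun x _ => by simp [slice0])
    (Set.forall_mem_image.2 fun x hx => hU x hx)
  refine ⟨y, fun x hx => ?_⟩
  obtain ⟨hana, hval, heq⟩ := hy (slice0 x) (Set.mem_image_of_mem slice0 hx)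
  exact ⟨hval, hana, heq⟩

lemma exists_isOpen_inter_eq_slice0_image {A : Set (Fin 3 → ℝ)} (hA : IsOpen A)
    {Q : (Fin 4 → ℝ) → Prop} (hQ : ∀ x ∈ A, ∀ᶠ Y in 𝓝 (slice0 x), Q Y) :
    ∃ B : Set (Fin 4 → ℝ), IsOpen B ∧ B ∩ {y | y 0 = 0} = slice0 '' A ∧ ∀ Y ∈ B, Q Y := by
  have htail : Continuous (Fin.tail : (Fin 4 → ℝ) → Fin 3 → ℝ) :=
    continuous_pi fun i => continuous_apply i.succ
  refine ⟨Fin.tail ⁻¹' A ∩ interior {Y | Q Y}, (hA.preimage htail).inter isOpen_interior,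
    Set.Subset.antisymm ?_ (Set.image_subset_iff.2 fun x hx => ?_),
    fun Y hY => interior_subset hY.2⟩
  · rintro Y ⟨⟨hYA, -⟩, hY0⟩
    exact ⟨Fin.tail Y, hYA, (congrArg (Fin.cons · _) hY0.symm).trans (Fin.cons_self_tail Y)⟩
  · exact ⟨⟨hx, mem_interior_iff_mem_nhds.2 (hQ x hx)⟩, rfl⟩

lemma sum_pd3_sq (f : (Fin 3 → ℝ) → ℂ) (x : Fin 3 → ℝ) :
    ∑ i : Fin 3, pd3 i f x ^ 2 = grad ℝ f x ⬝ᵥ grad ℝ f x :=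
  Finset.sum_congr rfl fun _ _ => sq _

lemma sum_pd_sq (φ : (Fin 4 → ℝ) → ℂ) (Y : Fin 4 → ℝ) :
    ∑ i : Fin 4, pd i φ Y ^ 2 = grad ℝ φ Y ⬝ᵥ grad ℝ φ Y :=
  Finset.sum_congr rfl fun _ _ => sq _

lemma sum_pd_pd (φ : (Fin 4 → ℝ) → ℂ) (Y : Fin 4 → ℝ) :
    ∑ i : Fin 4, pd i (pd i φ) Y = (jacobian ℝ (grad ℝ φ) Y).trace := rfl

end Existence

/-- The existence part of Theorem 13.5: every real-analytic horizontally conformal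
submersion `f` on an open subset of `ℝ³` is the boundary value at infinity of a
real-analytic submersion on a neighbourhood in `ℝ⁴` which is a hyperbolic harmonic
morphism off the boundary (expressed by the conformally invariant equations
`x₀·Δφ − 2∂φ/∂x₀ = 0` and `∑ᵢ (∂ᵢφ)² = 0`). -/
theorem horizontally_conformal_submersion_bounds_hyperbolic_harmonic_morphism
    (A3 : Set (Fin 3 → ℝ)) (hA3 : IsOpen A3)
    (f : (Fin 3 → ℝ) → ℂ) (hf : AnalyticOnNhd ℝ f A3)
    (hconf : ∀ x ∈ A3, ∑ i : Fin 3, (pd3 i f x) ^ 2 = 0)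
    (hsub : ∀ x ∈ A3, Function.Surjective (fderiv ℝ f x)) :
    ∃ A4 : Set (Fin 4 → ℝ), IsOpen A4 ∧
      A4 ∩ {y | y 0 = 0} = slice0 '' A3 ∧
      ∃ φ : (Fin 4 → ℝ) → ℂ, AnalyticOnNhd ℝ φ A4 ∧
        (∀ y ∈ A4, Function.Surjective (fderiv ℝ φ y)) ∧
        (∀ x ∈ A3, φ (slice0 x) = f x) ∧
        (∀ y ∈ A4, (y 0 : ℂ) * (∑ i : Fin 4, pd i (pd i φ) y) - 2 * pd 0 φ y = 0) ∧
        (∀ y ∈ A4, ∑ i : Fin 4, (pd i φ y) ^ 2 = 0) := by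
  simp only [sum_pd3_sq] at hconf
  have hgrad (x) (hx : x ∈ A3) : grad ℝ f x ≠ 0 :=
    (fderiv_surjective_iff_grad_ne_zero (hconf x hx)).1 (hsub x hx)
  obtain ⟨F, U, hFU⟩ := exists_isConformalPairAt hA3 hf hconf hgrad
  obtain ⟨y, hy⟩ := exists_isFootAt fun x hx => (hFU x hx).2.analyticAt_right
  have hslice (x) (hx : x ∈ A3) : IsConformalPairAt F U (y (slice0 x)) :=
    (hy x hx).1 ▸ (hFU x hx).2
  obtain ⟨A4, hA4, hboundary, hpair⟩ := exists_isOpen_inter_eq_slice0_image hA3 fun x hx =>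
    (hy x hx).2.eventually_isConformalPairAt (hslice x hx)
  have hnull (Y) (hY : Y ∈ A4) := (hpair Y hY).2.grad_dotProduct_self (hpair Y hY).1
  refine ⟨A4, hA4, hboundary, fun Y => F (y Y), fun Y hY => ?_, fun Y hY => ?_, fun x hx => ?_,
    fun Y hY => ?_, fun Y hY => ?_⟩
  · exact (hpair Y hY).2.analyticAt_left_comp (hpair Y hY).1
  · exact (fderiv_surjective_iff_grad_ne_zero (hnull Y hY)).2 <|
      ((hpair Y hY).2.linearIndependent_grad_nullNormal (hpair Y hY).1).ne_zero 0
  · exact (congrArg F (hy x hx).1).trans (hFU x hx).1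
  · rw [sum_pd_pd]
    exact sub_eq_zero.2 ((hpair Y hY).2.height_mul_trace_hessian (hpair Y hY).1)
  · exact (sum_pd_sq _ Y).trans (hnull Y hY)

end
end
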